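/- Let k ≥ 1, n = 2k+3, and let q₁,…,qₙ ∈ ℝ² be points in convex position. For each k-relevant pair e of {1,…,n} (these are exactly the pairs of length k+1, i.e. of the form {a, a+k+1} with indices mod n), let H_e denote the big open half-plane of e: the open half-plane bounded by the line through the two points of e that contains the k+1 points q_m with m lying on the longer of the two arcs determined by e. Then the following are equivalent: (i) for every three pairwise disjoint k-relevant pairs e₁, e₂, e₃ such that the set of all pairs of {1,…,n} other than e₁, e₂, e₃ is (k+1)-crossing-free (i.e., is an octahedral k-triangulation), the intersection H_{e₁} ∩ H_{e₂} ∩ H_{e₃} is nonempty; (ii) the intersection of H_e over all k-relevant pairs e is nonempty. -/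

import Mathlib

open scoped BigOperators

/-- A pair `{i,j}` of distinct vertices of the `n`-gon.  Vertices `1,…,n` are represented by
`Fin n` (vertex `i` corresponds to `i-1 : Fin n`), and a pair is recorded with its endpoints
in increasing order. -/
abbrev Pair (n : ℕ) := {p : Fin n × Fin n // p.1 < p.2}

/-- Two pairs `{i,j}` (`i<j`) and `{k,l}` (`k<l`) cross if `i<k<j<l` or `k<i<l<j`. -/
def Cross {n : ℕ} (e f : Pair n) : Prop :=
  (e.val.1 < f.val.1 ∧ f.val.1 < e.val.2 ∧ e.val.2 < f.val.2) ∨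
  (f.val.1 < e.val.1 ∧ e.val.1 < f.val.2 ∧ f.val.2 < e.val.2)

/-- A set of pairs is `(k+1)`-crossing-free if it contains no `k+1` pairwise crossing pairs. -/
def CrossingFree (n k : ℕ) (S : Set (Pair n)) : Prop :=
  ¬ ∃ C : Finset (Pair n), ↑C ⊆ S ∧ C.card = k + 1 ∧
      ∀ e ∈ C, ∀ f ∈ C, e ≠ f → Cross e f

/-- A `k`-triangulation of the `n`-gon: an inclusion-maximal `(k+1)`-crossing-free set. -/
def IsTriangulation (n k : ℕ) (T : Set (Pair n)) : Prop :=
  CrossingFree n k T ∧ ∀ S : Set (Pair n), CrossingFree n k S → T ⊆ S → S = T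

/-- The length of a pair `{i,j}` with respect to the `N`-gon: `min (j-i) (N-(j-i))`. -/
def pairLen (N : ℕ) {n : ℕ} (e : Pair n) : ℕ :=
  min ((e.val.2 : ℕ) - (e.val.1 : ℕ)) (N - ((e.val.2 : ℕ) - (e.val.1 : ℕ)))

/-- A pair is `k`-relevant in the `N`-gon if its length is at least `k+1`. -/
def Relevant (N k : ℕ) {n : ℕ} (e : Pair n) : Prop := k + 1 ≤ pairLen N e

/-- The 2×2 determinant `det (u v)` of two plane vectors. -/
def det2 (u v : ℝ × ℝ) : ℝ := u.1 * v.2 - u.2 * v.1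

/-- Points in convex position, listed in counterclockwise order along their convex hull:
they are distinct and every triple `i<j<k` is positively oriented. -/
def ConvexPosition {n : ℕ} (q : Fin n → ℝ × ℝ) : Prop :=
  Function.Injective q ∧
  ∀ i j k : Fin n, i < j → j < k → 0 < det2 (q j - q i) (q k - q i)

/-- `p` lies on the line through `a` and `b`. -/
def onLine (a b p : ℝ × ℝ) : Prop := det2 (b - a) (p - a) = 0

/-- Row of the bar-and-joint rigidity matrix `R(p)` indexed by the pair `e`:
`p_i - p_j` in block `i`, `p_j - p_i` in block `j`, zeros elsewhere. -/
def bjRow {n d : ℕ} (p : Fin n → Fin d → ℝ) (e : Pair n) : Fin n × Fin d → ℝ :=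
  fun ma =>
    if ma.1 = e.val.1 then p e.val.1 ma.2 - p e.val.2 ma.2
    else if ma.1 = e.val.2 then p e.val.2 ma.2 - p e.val.1 ma.2
    else 0

/-- Row of the hyperconnectivity matrix `H(p)` indexed by the pair `e`:
`p_j` in block `i`, `-p_i` in block `j`, zeros elsewhere. -/
def hypRow {n d : ℕ} (p : Fin n → Fin d → ℝ) (e : Pair n) : Fin n × Fin d → ℝ :=
  fun ma =>
    if ma.1 = e.val.1 then p e.val.2 ma.2
    else if ma.1 = e.val.2 then - p e.val.1 ma.2
    else 0

/-- The vector `c_{ij} = ((x_i-x_j)^{d-1}, (x_i-x_j)^{d-2}(y_i-y_j), …, (y_i-y_j)^{d-1})`. -/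
def cvec (d : ℕ) (qi qj : ℝ × ℝ) : Fin d → ℝ :=
  fun a => (qi.1 - qj.1) ^ (d - 1 - (a : ℕ)) * (qi.2 - qj.2) ^ (a : ℕ)

/-- Row of the cofactor rigidity matrix `C_d(q)` indexed by the pair `e`:
`c_{ij}` in block `i`, `-c_{ij}` in block `j`, zeros elsewhere. -/
def cofRow (d : ℕ) {n : ℕ} (q : Fin n → ℝ × ℝ) (e : Pair n) : Fin n × Fin d → ℝ :=
  fun ma =>
    if ma.1 = e.val.1 then cvec d (q e.val.1) (q e.val.2) ma.2
    else if ma.1 = e.val.2 then - cvec d (q e.val.1) (q e.val.2) ma.2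
    else 0

/-- `x_{ij} = X_i Z_j - Z_i X_j` for vectors in `ℝ³`. -/
def xQ (Qi Qj : ℝ × ℝ × ℝ) : ℝ := Qi.1 * Qj.2.2 - Qi.2.2 * Qj.1

/-- `y_{ij} = Y_i Z_j - Z_i Y_j` for vectors in `ℝ³`. -/
def yQ (Qi Qj : ℝ × ℝ × ℝ) : ℝ := Qi.2.1 * Qj.2.2 - Qi.2.2 * Qj.2.1

/-- The vector `c_{ij} = (x_{ij}^{d-1}, x_{ij}^{d-2} y_{ij}, …, y_{ij}^{d-1})`. -/
def gcvec (d : ℕ) (Qi Qj : ℝ × ℝ × ℝ) : Fin d → ℝ :=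
  fun a => (xQ Qi Qj) ^ (d - 1 - (a : ℕ)) * (yQ Qi Qj) ^ (a : ℕ)

/-- Row of the generalized cofactor rigidity matrix `C_d(Q)` for vectors in `ℝ³`. -/
def gcofRow (d : ℕ) {n : ℕ} (Q : Fin n → ℝ × ℝ × ℝ) (e : Pair n) : Fin n × Fin d → ℝ :=
  fun ma =>
    if ma.1 = e.val.1 then gcvec d (Q e.val.1) (Q e.val.2) ma.2
    else if ma.1 = e.val.2 then - gcvec d (Q e.val.1) (Q e.val.2) ma.2
    else 0

/-- The cone of all nonnegative linear combinations of `{v e : e ∈ S}`. -/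
def coneOf {n : ℕ} {V : Type*} [AddCommGroup V] [Module ℝ V]
    (v : Pair n → V) (S : Set (Pair n)) : Set V :=
  {x | ∃ c : Pair n → ℝ, (∀ e, 0 ≤ c e) ∧ (∀ e, c e ≠ 0 → e ∈ S) ∧ x = ∑ e, c e • v e}

/-- The vectors `(v e)` realize the `k`-associahedron of the `n`-gon as a complete
simplicial fan: (a) the vectors of every `k`-triangulation are linearly independent;
(b) cones of two `k`-triangulations intersect in the cone of their intersection;
(c) the union of all the cones is the linear span of all the vectors. -/
def RealizesFan (n k : ℕ) {V : Type*} [AddCommGroup V] [Module ℝ V]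
    (v : Pair n → V) : Prop :=
  (∀ T : Set (Pair n), IsTriangulation n k T →
      LinearIndependent ℝ (fun e : T => v e.val)) ∧
  (∀ T T' : Set (Pair n), IsTriangulation n k T → IsTriangulation n k T' →
      coneOf v T ∩ coneOf v T' = coneOf v (T ∩ T')) ∧
  (⋃ T ∈ {T : Set (Pair n) | IsTriangulation n k T}, coneOf v T) =
    (Submodule.span ℝ (Set.range v) : Set V)

/-- Two pairs share no endpoint. -/
def PairDisjoint {n : ℕ} (e f : Pair n) : Prop :=
  e.val.1 ≠ f.val.1 ∧ e.val.1 ≠ f.val.2 ∧ e.val.2 ≠ f.val.1 ∧ e.val.2 ≠ f.val.2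

/-- `m` lies on the longer of the two arcs determined by the pair `e` of the `n`-gon. -/
def OnLongArc {n : ℕ} (e : Pair n) (m : Fin n) : Prop :=
  if n < 2 * ((e.val.2 : ℕ) - (e.val.1 : ℕ)) then e.val.1 < m ∧ m < e.val.2
  else m < e.val.1 ∨ e.val.2 < m

/-- The big open half-plane of a pair `e`: the open half-plane bounded by the line through the
two points of `e` containing the points `q m` for `m` on the longer arc of `e`. -/
def bigHalf {n : ℕ} (q : Fin n → ℝ × ℝ) (e : Pair n) : Set (ℝ × ℝ) :=
  {p | ∀ m : Fin n, OnLongArc e m →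
    0 < det2 (q e.val.2 - q e.val.1) (p - q e.val.1) *
        det2 (q e.val.2 - q e.val.1) (q m - q e.val.1)}

/-!
A `k`-relevant pair of the `(2k+3)`-gon joins `t` to `t + k + 1` for a unique start `t` modulo
`2k+3`, and its big half-plane lies to the left of the line directed from `t` to `t + k + 1`. By
Helly's theorem it suffices to find a common point of any three of these half-planes, with starts
`a < b < c < a + (2k+3)`. If some cyclic gap between the starts is at least `k + 2`, the midpoint of
an edge of the polygon works; if some gap equals `k + 1`, the two corresponding pairs share a vertex
lying in the third half-plane, and this vertex can be pushed slightly into the other two. If all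
gaps are at most `k`, the three pairs are disjoint, and the remaining relevant pairs are covered by
`k` vertices; since `k + 1` pairwise crossing pairs are relevant and disjoint, the complement of the
three pairs is `(k+1)`-crossing-free, and hypothesis (i) provides the common point.
-/

section Orientation

variable {a b c d x y : ℝ × ℝ}

/-- Twice the signed area of the triangle `a b p`; it is positive when the triangle is
counterclockwise. -/
def orient (a b p : ℝ × ℝ) : ℝ := det2 (b - a) (p - a)

/-- The open half-plane to the left of the line directed from `a` to `b`. -/
def leftOf (a b : ℝ × ℝ) : Set (ℝ × ℝ) := {p | 0 < orient a b p}

theorem mem_leftOf : x ∈ leftOf a b ↔ 0 < orient a b x := Iff.rfl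

theorem orient_rotate (a b c : ℝ × ℝ) : orient a b c = orient b c a := by
  simp only [orient, det2, Prod.fst_sub, Prod.snd_sub]; ring

theorem orient_swap (a b c : ℝ × ℝ) : orient b a c = -orient a b c := by
  simp only [orient, det2, Prod.fst_sub, Prod.snd_sub]; ring

theorem orient_self_left (a b : ℝ × ℝ) : orient a b a = 0 := by
  simp [orient, det2]

theorem orient_self_right (a b : ℝ × ℝ) : orient a b b = 0 := by
  simp only [orient, det2]; ring

theorem orient_smul_add_smul (a b x y : ℝ × ℝ) {s t : ℝ} (h : s + t = 1) :
    orient a b (s • x + t • y) = s * orient a b x + t * orient a b y := by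
  obtain rfl : s = 1 - t := by linarith
  simp only [orient, det2, Prod.fst_sub, Prod.snd_sub, Prod.fst_add, Prod.snd_add, Prod.smul_fst,
    Prod.smul_snd, smul_eq_mul]
  ring

theorem openSegment_subset_leftOf (hx : 0 ≤ orient a b x) (hy : y ∈ leftOf a b) :
    openSegment ℝ x y ⊆ leftOf a b := by
  rintro _ ⟨s, t, hs, ht, hst, rfl⟩
  rw [mem_leftOf, orient_smul_add_smul a b x y hst]
  exact add_pos_of_nonneg_of_pos (mul_nonneg hs.le hx) (mul_pos ht hy)

theorem convex_leftOf (a b : ℝ × ℝ) : Convex ℝ (leftOf a b) :=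
  convex_iff_openSegment_subset.2 fun _ hx _ hy => openSegment_subset_leftOf (le_of_lt hx) hy

theorem isOpen_leftOf (a b : ℝ × ℝ) : IsOpen (leftOf a b) := by
  unfold leftOf orient det2
  exact isOpen_lt continuous_const (by fun_prop)

theorem leftOf_inter_leftOf_inter_nonempty {U : Set (ℝ × ℝ)} (hab : 0 ≤ orient a b x)
    (hcd : 0 ≤ orient c d x) (hyab : y ∈ leftOf a b) (hycd : y ∈ leftOf c d) (hU : IsOpen U)
    (hxU : x ∈ U) : (leftOf a b ∩ leftOf c d ∩ U).Nonempty := by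
  have hx : x ∈ closure (openSegment ℝ x y) := by
    rw [closure_openSegment]
    exact left_mem_segment ℝ x y
  obtain ⟨z, hzU, hz⟩ := mem_closure_iff.1 hx U hU hxU
  exact ⟨z, ⟨openSegment_subset_leftOf hab hyab hz, openSegment_subset_leftOf hcd hycd hz⟩, hzU⟩

end Orientation

section ConvexPosition

variable {n : ℕ} {q : Fin n → ℝ × ℝ}

theorem setOf_forall_mul_pos_eq {α : Type*} {f : α → ℝ} {s : Set α} (hs : s.Nonempty)
    (hf : ∀ y ∈ s, 0 < f y) : {x | ∀ y ∈ s, 0 < f x * f y} = {x | 0 < f x} := by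
  obtain ⟨y, hy⟩ := hs
  ext x
  exact ⟨fun h => pos_of_mul_pos_left (h y hy) (hf y hy).le, fun h z hz => mul_pos h (hf z hz)⟩

theorem bigHalf_eq_leftOf_of_le (hn : 3 ≤ n) (hq : ConvexPosition q) {e : Pair n}
    (he : 2 * ((e.val.2 : ℕ) - e.val.1) ≤ n) :
    bigHalf q e = leftOf (q e.val.1) (q e.val.2) := by
  obtain ⟨⟨i, j⟩, hij⟩ := e
  have harc (m : Fin n) : OnLongArc ⟨(i, j), hij⟩ m ↔ m < i ∨ j < m := by
    rw [OnLongArc, if_neg he.not_gt]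
  have hne : (q '' {m | m < i ∨ j < m}).Nonempty := by
    refine Set.Nonempty.image q ?_
    rcases Nat.eq_zero_or_pos i with hi | hi
    · exact ⟨⟨n - 1, by lia⟩, Or.inr (by simp only [Fin.lt_def] at *; lia)⟩
    · exact ⟨⟨0, by lia⟩, Or.inl hi⟩
  have hpos : ∀ p ∈ q '' {m | m < i ∨ j < m}, 0 < orient (q i) (q j) p := by
    rintro _ ⟨m, hm | hm, rfl⟩
    · rw [← orient_rotate]
      exact hq.2 m i j hm hij
    · exact hq.2 i j m hij hm
  refine Eq.trans ?_ (setOf_forall_mul_pos_eq hne hpos)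
  ext p
  simp only [bigHalf, harc, Set.forall_mem_image]
  rfl

theorem bigHalf_eq_leftOf_of_lt (hq : ConvexPosition q) {e : Pair n}
    (he : n < 2 * ((e.val.2 : ℕ) - e.val.1)) :
    bigHalf q e = leftOf (q e.val.2) (q e.val.1) := by
  obtain ⟨⟨i, j⟩, hij⟩ := e
  have harc (m : Fin n) : OnLongArc ⟨(i, j), hij⟩ m ↔ i < m ∧ m < j := by
    rw [OnLongArc, if_pos he]
  have hne : (q '' {m | i < m ∧ m < j}).Nonempty :=
    Set.Nonempty.image q ⟨⟨i + 1, by lia⟩, by simp only [Set.mem_ofPred, Fin.lt_def] at *; lia⟩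
  have hpos : ∀ p ∈ q '' {m | i < m ∧ m < j}, 0 < orient (q j) (q i) p := by
    rintro _ ⟨m, ⟨him, hmj⟩, rfl⟩
    rw [orient_rotate]
    exact hq.2 i m j him hmj
  refine Eq.trans ?_ (setOf_forall_mul_pos_eq hne hpos)
  ext p
  simp only [bigHalf, harc, Set.forall_mem_image, orient_swap (q i) (q j), neg_mul_neg]
  rfl

variable [NeZero n]

/-- The `n`-periodic extension to `ℕ` of a sequence indexed by the vertices of the `n`-gon, so that
a cyclically ordered list of vertices becomes an increasing sequence of indices. -/
def periodicExt {α : Type*} (q : Fin n → α) (t : ℕ) : α := q (Fin.ofNat n t)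

theorem periodicExt_of_lt {α : Type*} (q : Fin n → α) {t : ℕ} (ht : t < n) :
    periodicExt q t = q ⟨t, ht⟩ := by
  simp [periodicExt, Fin.ofNat, Nat.mod_eq_of_lt ht]

theorem periodicExt_add {α : Type*} (q : Fin n → α) (t : ℕ) :
    periodicExt q (t + n) = periodicExt q t := by
  simp [periodicExt, Fin.ofNat]

theorem orient_periodicExt_pos_of_lt (hq : ConvexPosition q) {a b c : ℕ} (hab : a < b) (hbc : b < c)
    (hc : c < n) : 0 < orient (periodicExt q a) (periodicExt q b) (periodicExt q c) := by
  rw [periodicExt_of_lt q hc, periodicExt_of_lt q (hbc.trans hc),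
    periodicExt_of_lt q (hab.trans (hbc.trans hc))]
  exact hq.2 _ _ _ hab hbc

theorem orient_periodicExt_pos (hq : ConvexPosition q) {a b c : ℕ} (hab : a < b) (hbc : b < c)
    (hca : c < a + n) : 0 < orient (periodicExt q a) (periodicExt q b) (periodicExt q c) := by
  rcases lt_or_ge c n with hc | hc
  · exact orient_periodicExt_pos_of_lt hq hab hbc hc
  -- Moving the largest index `c` to the front as `c - n` keeps the cyclic order.
  · obtain ⟨c, rfl⟩ := Nat.exists_eq_add_of_le' hc
    rw [periodicExt_add, ← orient_rotate]
    exact orient_periodicExt_pos hq (by lia) hab (by lia)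
termination_by a + b + c
decreasing_by
  have := NeZero.pos n
  lia

theorem orient_periodicExt_nonneg (hq : ConvexPosition q) {a b c : ℕ} (hab : a < b) (hbc : b ≤ c)
    (hca : c ≤ a + n) : 0 ≤ orient (periodicExt q a) (periodicExt q b) (periodicExt q c) := by
  rcases hbc.eq_or_lt with rfl | hbc
  · exact (orient_self_right _ _).ge
  rcases hca.eq_or_lt with rfl | hca
  · rw [periodicExt_add, orient_self_left]
  · exact (orient_periodicExt_pos hq hab hbc hca).le

theorem midpoint_periodicExt_mem_leftOf (hq : ConvexPosition q) {a b m : ℕ} (hab : a < b)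
    (hba : b + 1 < a + n) (hbm : b ≤ m) (hma : m < a + n) :
    midpoint ℝ (periodicExt q m) (periodicExt q (m + 1)) ∈
      leftOf (periodicExt q a) (periodicExt q b) := by
  rcases hbm.eq_or_lt with rfl | hbm
  · exact openSegment_subset_leftOf (orient_self_right _ _).ge
      (orient_periodicExt_pos hq hab (by lia) hba) (midpoint_mem_openSegment _ _)
  · rw [midpoint_comm]
    exact openSegment_subset_leftOf (orient_periodicExt_nonneg hq hab (by lia) hma)
      (orient_periodicExt_pos hq hab hbm hma) (midpoint_mem_openSegment _ _)

end ConvexPosition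

section LongHalf

variable {k : ℕ} {q : Fin (2 * k + 3) → ℝ × ℝ} {a b c : ℕ}

/-- The half-plane to the left of the line directed from vertex `t` to vertex `t + k + 1` of the
`(2k+3)`-gon, with indices read modulo `2k+3`; it contains the `k + 1` vertices strictly between
`t + k + 1` and `t + 2k + 3`. -/
def longHalf (q : Fin (2 * k + 3) → ℝ × ℝ) (t : ℕ) : Set (ℝ × ℝ) :=
  leftOf (periodicExt q t) (periodicExt q (t + k + 1))

theorem longHalf_add (q : Fin (2 * k + 3) → ℝ × ℝ) (t : ℕ) :
    longHalf q (t + (2 * k + 3)) = longHalf q t := by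
  have hshift : t + (2 * k + 3) + k + 1 = t + k + 1 + (2 * k + 3) := by ring
  simp only [longHalf, hshift, periodicExt_add]

theorem midpoint_periodicExt_mem_longHalf (hq : ConvexPosition q) {t m : ℕ} (htm : t + k + 1 ≤ m)
    (hmt : m < t + (2 * k + 3)) :
    midpoint ℝ (periodicExt q m) (periodicExt q (m + 1)) ∈ longHalf q t :=
  midpoint_periodicExt_mem_leftOf hq (by lia) (by lia) htm hmt

theorem longHalf_inter_nonempty_of_add_two_le (hq : ConvexPosition q) (hab : a + k + 2 ≤ b)
    (hbc : b < c) (hca : c < a + (2 * k + 3)) :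
    (longHalf q a ∩ longHalf q b ∩ longHalf q c).Nonempty := by
  rw [← longHalf_add q a]
  exact ⟨_, ⟨midpoint_periodicExt_mem_longHalf hq (m := b + 2 * k + 2) (by lia) (by lia),
    midpoint_periodicExt_mem_longHalf hq (by lia) (by lia)⟩,
    midpoint_periodicExt_mem_longHalf hq (by lia) (by lia)⟩

theorem longHalf_inter_nonempty_of_eq_add_one (hq : ConvexPosition q) (hab : b = a + k + 1)
    (hbc : b < c) (hca : c < a + (2 * k + 3)) :
    (longHalf q a ∩ longHalf q b ∩ longHalf q c).Nonempty := by
  subst hab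
  have hmem : periodicExt q (a + k + 1) ∈ longHalf q c := by
    rw [← periodicExt_add]
    exact orient_periodicExt_pos hq (by lia) (by lia) (by lia)
  exact leftOf_inter_leftOf_inter_nonempty (orient_self_right _ _).ge (orient_self_left _ _).ge
    (midpoint_periodicExt_mem_longHalf hq (m := a + 2 * k + 2) (by lia) (by lia))
    (midpoint_periodicExt_mem_longHalf hq (by lia) (by lia)) (isOpen_leftOf _ _) hmem

theorem longHalf_inter_nonempty_of_add_one_le (hq : ConvexPosition q) (hab : a + k + 1 ≤ b)
    (hbc : b < c) (hca : c < a + (2 * k + 3)) :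
    (longHalf q a ∩ longHalf q b ∩ longHalf q c).Nonempty := by
  rcases hab.eq_or_lt with hab | hab
  · exact longHalf_inter_nonempty_of_eq_add_one hq hab.symm hbc hca
  · exact longHalf_inter_nonempty_of_add_two_le hq hab hbc hca

theorem longHalf_inter_nonempty_of_exists_gap (hq : ConvexPosition q) (hab : a < b) (hbc : b < c)
    (hca : c < a + (2 * k + 3))
    (hgap : a + k + 1 ≤ b ∨ b + k + 1 ≤ c ∨ c + k + 1 ≤ a + (2 * k + 3)) :
    (longHalf q a ∩ longHalf q b ∩ longHalf q c).Nonempty := by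
  rcases hgap with hgap | hgap | hgap
  · exact longHalf_inter_nonempty_of_add_one_le hq hgap hbc hca
  · have h := longHalf_inter_nonempty_of_add_one_le (a := b) (b := c) (c := a + (2 * k + 3)) hq hgap
      hca (by lia)
    rwa [longHalf_add, Set.inter_comm, ← Set.inter_assoc] at h
  · have h := longHalf_inter_nonempty_of_add_one_le (a := c) (b := a + (2 * k + 3))
      (c := b + (2 * k + 3)) hq hgap (by lia) (by lia)
    rwa [longHalf_add, longHalf_add, Set.inter_assoc, Set.inter_comm] at h

end LongHalf

section Crossing

variable {n : ℕ} {e f : Pair n} {C : Finset (Pair n)}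

theorem pairDisjoint_of_cross (h : Cross e f) : PairDisjoint e f := by
  have := e.2
  have := f.2
  simp only [Cross, PairDisjoint, Fin.lt_def, ne_eq, Fin.ext_iff] at *
  lia

theorem card_le_card_of_vertex_cover {A : Finset (Fin n)}
    (hC : ∀ e ∈ C, ∀ f ∈ C, e ≠ f → PairDisjoint e f)
    (hA : ∀ e ∈ C, e.val.1 ∈ A ∨ e.val.2 ∈ A) : C.card ≤ A.card := by
  refine Finset.card_le_card_of_forall_subsingleton (fun e v => v = e.val.1 ∨ v = e.val.2) ?_ ?_
  · intro e he
    rcases hA e he with h | h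
    · exact ⟨_, h, Or.inl rfl⟩
    · exact ⟨_, h, Or.inr rfl⟩
  · rintro v - e ⟨he, hve⟩ f ⟨hf, hvf⟩
    by_contra hef
    obtain ⟨h₁₁, h₁₂, h₂₁, h₂₂⟩ := hC e he f hf hef
    grind

/-- Each further pair of the crossing family has one endpoint on either side of `e`. -/
theorem card_le_pairLen_of_pairwise_cross (hC : ∀ e ∈ C, ∀ f ∈ C, e ≠ f → Cross e f)
    (he : e ∈ C) : C.card ≤ pairLen n e := by
  have hlt := e.2
  have hdisj : ∀ f ∈ C.erase e, ∀ g ∈ C.erase e, f ≠ g → PairDisjoint f g := fun f hf g hg hfg =>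
    pairDisjoint_of_cross (hC f (Finset.mem_of_mem_erase hf) g (Finset.mem_of_mem_erase hg) hfg)
  have hcross : ∀ f ∈ C.erase e, Cross e f := fun f hf =>
    hC e he f (Finset.mem_of_mem_erase hf) (Finset.ne_of_mem_erase hf).symm
  have hinside : (C.erase e).card ≤ (Finset.Ioo e.val.1 e.val.2).card := by
    refine card_le_card_of_vertex_cover hdisj fun f hf => ?_
    have := hcross f hf
    simp only [Cross, Finset.mem_Ioo] at *
    lia
  have houtside : (C.erase e).card ≤ (Finset.Icc e.val.1 e.val.2)ᶜ.card := by
    refine card_le_card_of_vertex_cover hdisj fun f hf => ?_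
    have := hcross f hf
    simp only [Cross, Finset.mem_compl, Finset.mem_Icc] at *
    lia
  have hcard := Finset.card_erase_add_one he
  rw [Fin.card_Ioo] at hinside
  rw [Finset.card_compl, Fin.card_Icc, Fintype.card_fin] at houtside
  simp only [pairLen, Fin.lt_def] at *
  lia

end Crossing

section LongPair

variable {k : ℕ} {a b c s t : ℕ}

/-- The pair joining the vertices `t` and `t + k + 1` of the `(2k+3)`-gon, with indices read modulo
`2k+3`; these are exactly the `k`-relevant pairs. -/
def longPair (k t : ℕ) : Pair (2 * k + 3) :=
  ⟨(min (Fin.ofNat _ t) (Fin.ofNat _ (t + k + 1)), max (Fin.ofNat _ t) (Fin.ofNat _ (t + k + 1))),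
    min_lt_max.2 fun h => by
      have hmod : t + 0 ≡ t + (k + 1) [MOD 2 * k + 3] := congrArg Fin.val h
      have := (Nat.ModEq.add_left_cancel' t hmod).eq_of_lt_of_lt (by lia) (by lia)
      lia⟩

theorem longPair_of_lt (h : t + k + 1 < 2 * k + 3) :
    longPair k t = ⟨(⟨t, by lia⟩, ⟨t + k + 1, h⟩), by simp only [Fin.lt_def]; lia⟩ := by
  have ht : t < 2 * k + 3 := by lia
  simp only [longPair, Fin.ofNat, Nat.mod_eq_of_lt h, Nat.mod_eq_of_lt ht, Subtype.mk.injEq,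
    Prod.mk.injEq, min_eq_left_iff, max_eq_right_iff, Fin.le_def]
  lia

theorem longPair_of_le (ht : t < 2 * k + 3) (h : 2 * k + 3 ≤ t + k + 1) :
    longPair k t = ⟨(⟨t + k + 1 - (2 * k + 3), by lia⟩, ⟨t, ht⟩), by
      simp only [Fin.lt_def]; lia⟩ := by
  have hmod : (t + k + 1) % (2 * k + 3) = t + k + 1 - (2 * k + 3) := by
    rw [Nat.mod_eq_sub_mod h, Nat.mod_eq_of_lt (by lia)]
  simp only [longPair, Fin.ofNat, hmod, Nat.mod_eq_of_lt ht, Subtype.mk.injEq,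
    Prod.mk.injEq, min_eq_right_iff, max_eq_left_iff, Fin.le_def]
  lia

theorem relevant_iff_exists_longPair {e : Pair (2 * k + 3)} :
    Relevant (2 * k + 3) k e ↔ ∃ t < 2 * k + 3, e = longPair k t := by
  constructor
  · intro h
    obtain ⟨⟨i, j⟩, hij⟩ := e
    simp only [Relevant, pairLen, Fin.lt_def] at h hij
    obtain hj | hj : (j : ℕ) = i + k + 1 ∨ (j : ℕ) = i + k + 2 := by lia
    · refine ⟨i, i.2, ?_⟩
      rw [longPair_of_lt (by lia)]
      simp [Fin.ext_iff, hj]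
    · refine ⟨j, j.2, ?_⟩
      rw [longPair_of_le j.2 (by lia)]
      simp only [Subtype.mk.injEq, Prod.mk.injEq, Fin.ext_iff]
      lia
  · rintro ⟨t, ht, rfl⟩
    rcases lt_or_ge (t + k + 1) (2 * k + 3) with h | h
    · rw [longPair_of_lt h, Relevant, pairLen]
      lia
    · rw [longPair_of_le ht h, Relevant, pairLen]
      lia

theorem bigHalf_longPair {q : Fin (2 * k + 3) → ℝ × ℝ} (hq : ConvexPosition q)
    (ht : t < 2 * k + 3) : bigHalf q (longPair k t) = longHalf q t := by
  rcases lt_or_ge (t + k + 1) (2 * k + 3) with h | h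
  · rw [longPair_of_lt h, bigHalf_eq_leftOf_of_le (by lia) hq (by simp only; lia), longHalf,
      periodicExt_of_lt q ht, periodicExt_of_lt q h]
  · have hend : periodicExt q (t + k + 1) = q ⟨t + k + 1 - (2 * k + 3), by lia⟩ := by
      rw [← periodicExt_of_lt q, ← periodicExt_add q (_ - _), Nat.sub_add_cancel h]
    rw [longPair_of_le ht h, bigHalf_eq_leftOf_of_lt hq (by simp only; lia), longHalf,
      periodicExt_of_lt q ht, hend]

theorem pairDisjoint_longPair (hst : s < t) (ht : t < 2 * k + 3) (h₁ : t ≠ s + k + 1)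
    (h₂ : t ≠ s + k + 2) : PairDisjoint (longPair k s) (longPair k t) := by
  rcases lt_or_ge (s + k + 1) (2 * k + 3) with hs' | hs' <;>
  rcases lt_or_ge (t + k + 1) (2 * k + 3) with ht' | ht' <;>
  simp only [longPair_of_lt, longPair_of_le, PairDisjoint, hs', ht', ht, hst.trans ht, ne_eq,
    Fin.mk.injEq] <;>
  lia

theorem longPair_fst_mem_or_snd_mem {A : Finset (Fin (2 * k + 3))}
    (h : Fin.ofNat _ t ∈ A ∨ Fin.ofNat _ (t + k + 1) ∈ A) :
    (longPair k t).val.1 ∈ A ∨ (longPair k t).val.2 ∈ A := by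
  simp only [longPair]
  rcases le_total (Fin.ofNat (2 * k + 3) t) (Fin.ofNat (2 * k + 3) (t + k + 1)) with hle | hle
  · rwa [min_eq_left hle, max_eq_right hle]
  · rwa [min_eq_right hle, max_eq_left hle, or_comm]

/-- Along the cycle formed by the pairs `{t, t + k + 1}`, deleting the pairs starting at `a`, `b`
and `c` leaves three paths with an odd number of vertices each; every second vertex of each path
gives the cover, and these vertices are three intervals in the cyclic order. -/
theorem exists_vertex_cover_longPair (hc : c < 2 * k + 3) (h₁ : b ≤ a + k + 1) (h₂ : c ≤ b + k + 1)
    (h₃ : a + (2 * k + 3) ≤ c + k + 1) :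
    ∃ A : Finset (Fin (2 * k + 3)), A.card ≤ k ∧ ∀ t < 2 * k + 3, t ≠ a → t ≠ b → t ≠ c →
      (longPair k t).val.1 ∈ A ∨ (longPair k t).val.2 ∈ A := by
  let I : Finset ℕ := Finset.Ioo (a + k + 1) c ∪ Finset.Ioo (b + k + 1) (a + (2 * k + 3)) ∪
    Finset.Ioo (c + k + 1) (b + (2 * k + 3))
  refine ⟨I.image (Fin.ofNat _), Finset.card_image_le.trans ?_, fun t ht hta htb htc => ?_⟩
  · calc I.card ≤ (c - (a + k + 1) - 1) + (a + (2 * k + 3) - (b + k + 1) - 1) +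
        (b + (2 * k + 3) - (c + k + 1) - 1) := by
          simp only [← Nat.card_Ioo]
          exact (Finset.card_union_le _ _).trans (Nat.add_le_add_right (Finset.card_union_le _ _) _)
      _ ≤ k := by lia
  · have hmem : t ∈ I ∨ t + (2 * k + 3) ∈ I ∨ t + k + 1 ∈ I ∨ t + k + 1 + (2 * k + 3) ∈ I := by
      simp only [I, Finset.mem_union, Finset.mem_Ioo]
      omega
    have hperiod (m : ℕ) : Fin.ofNat (2 * k + 3) (m + (2 * k + 3)) = Fin.ofNat _ m :=
      periodicExt_add id m
    refine longPair_fst_mem_or_snd_mem ?_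
    rcases hmem with h | h | h | h <;>
    have h := Finset.mem_image_of_mem (Fin.ofNat (2 * k + 3)) h
    · exact Or.inl h
    · exact Or.inl (hperiod t ▸ h)
    · exact Or.inr h
    · exact Or.inr (hperiod (t + k + 1) ▸ h)

theorem crossingFree_compl_longPair (hc : c < 2 * k + 3) (h₁ : b ≤ a + k + 1) (h₂ : c ≤ b + k + 1)
    (h₃ : a + (2 * k + 3) ≤ c + k + 1) :
    CrossingFree (2 * k + 3) k
      {e | e ≠ longPair k a ∧ e ≠ longPair k b ∧ e ≠ longPair k c} := by
  rintro ⟨C, hCsub, hCcard, hCcross⟩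
  obtain ⟨A, hAcard, hA⟩ := exists_vertex_cover_longPair hc h₁ h₂ h₃
  have hcover : ∀ e ∈ C, e.val.1 ∈ A ∨ e.val.2 ∈ A := by
    intro e he
    have hrel : Relevant (2 * k + 3) k e :=
      hCcard.symm.trans_le (card_le_pairLen_of_pairwise_cross hCcross he)
    obtain ⟨t, ht, rfl⟩ := relevant_iff_exists_longPair.1 hrel
    obtain ⟨hta, htb, htc⟩ := hCsub he
    exact hA t ht (ne_of_apply_ne _ hta) (ne_of_apply_ne _ htb) (ne_of_apply_ne _ htc)
  have hle : C.card ≤ A.card := card_le_card_of_vertex_cover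
    (fun e he f hf hef => pairDisjoint_of_cross (hCcross e he f hf hef)) hcover
  lia

end LongPair

theorem exists_lt_lt_of_card_eq_three {α : Type*} [LinearOrder α] {s : Finset α}
    (hs : s.card = 3) : ∃ a b c, a < b ∧ b < c ∧ s = {a, b, c} := by
  refine ⟨s.orderEmbOfFin hs 0, s.orderEmbOfFin hs 1, s.orderEmbOfFin hs 2, by simp, by simp, ?_⟩
  calc s = Finset.univ.image (s.orderEmbOfFin hs) := (s.image_orderEmbOfFin_univ hs).symm
    _ = ({0, 1, 2} : Finset (Fin 3)).image (s.orderEmbOfFin hs) := rfl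
    _ = _ := by simp only [Finset.image_insert, Finset.image_singleton]

theorem biInter_nonempty_of_forall_lt_lt {ι E : Type*} [LinearOrder ι] [AddCommGroup E]
    [Module ℝ E] (hE : Module.finrank ℝ E = 2) {F : ι → Set E} {s : Finset ι} (hs : 3 ≤ s.card)
    (hconv : ∀ i ∈ s, Convex ℝ (F i))
    (hF : ∀ a ∈ s, ∀ b ∈ s, ∀ c ∈ s, a < b → b < c → (F a ∩ F b ∩ F c).Nonempty) :
    (⋂ i ∈ s, F i).Nonempty := by
  have : FiniteDimensional ℝ E := Module.finite_of_finrank_eq_succ hE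
  refine Convex.helly_theorem (𝕜 := ℝ) (by rwa [hE]) hconv fun I hI hcard => ?_
  rw [hE] at hcard
  obtain ⟨a, b, c, hab, hbc, rfl⟩ := exists_lt_lt_of_card_eq_three hcard
  simp only [Finset.insert_subset_iff, Finset.singleton_subset_iff] at hI
  simpa [Set.inter_assoc] using hF a hI.1 b hI.2.1 c hI.2.2 hab hbc

theorem iInter_bigHalf_nonempty_of_forall_lt_lt {k : ℕ} {q : Fin (2 * k + 3) → ℝ × ℝ}
    (hq : ConvexPosition q)
    (h : ∀ a b c, a < b → b < c → c < 2 * k + 3 →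
      (longHalf q a ∩ longHalf q b ∩ longHalf q c).Nonempty) :
    (⋂ e : {e : Pair (2 * k + 3) // Relevant (2 * k + 3) k e}, bigHalf q e.val).Nonempty := by
  have hhelly : (⋂ t ∈ Finset.range (2 * k + 3), longHalf q t).Nonempty :=
    biInter_nonempty_of_forall_lt_lt (by simp) (by simp) (fun t _ => convex_leftOf _ _)
      fun a _ b _ c hc hab hbc => h a b c hab hbc (Finset.mem_range.1 hc)
  refine hhelly.mono (Set.subset_iInter fun ⟨e, he⟩ => ?_)
  obtain ⟨t, ht, rfl⟩ := relevant_iff_exists_longPair.1 he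
  rw [bigHalf_longPair hq ht]
  exact Set.biInter_subset_of_mem (Finset.mem_range.2 ht)

/-- For `n = 2k+3` points in convex position: the big half-planes of the three
missing edges of every octahedral `k`-triangulation have a common point iff the big half-planes
of all `k`-relevant pairs have a common point. -/
theorem stmt17 (k : ℕ) (hk : 1 ≤ k) (q : Fin (2 * k + 3) → ℝ × ℝ)
    (hq : ConvexPosition q) :
    (∀ e₁ e₂ e₃ : Pair (2 * k + 3),
        Relevant (2 * k + 3) k e₁ → Relevant (2 * k + 3) k e₂ →
        Relevant (2 * k + 3) k e₃ →
        PairDisjoint e₁ e₂ → PairDisjoint e₁ e₃ → PairDisjoint e₂ e₃ →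
        CrossingFree (2 * k + 3) k {e | e ≠ e₁ ∧ e ≠ e₂ ∧ e ≠ e₃} →
        (bigHalf q e₁ ∩ bigHalf q e₂ ∩ bigHalf q e₃).Nonempty) ↔
      (⋂ e : {e : Pair (2 * k + 3) // Relevant (2 * k + 3) k e},
        bigHalf q e.val).Nonempty := by
  constructor
  · intro hoct
    refine iInter_bigHalf_nonempty_of_forall_lt_lt hq fun a b c hab hbc hc => ?_
    by_cases hgap : a + k + 1 ≤ b ∨ b + k + 1 ≤ c ∨ c + k + 1 ≤ a + (2 * k + 3)
    · exact longHalf_inter_nonempty_of_exists_gap hq hab hbc (by lia) hgap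
    · have hrel (t : ℕ) (ht : t < 2 * k + 3) : Relevant (2 * k + 3) k (longPair k t) :=
        relevant_iff_exists_longPair.2 ⟨t, ht, rfl⟩
      have hb := hbc.trans hc
      have ha := hab.trans hb
      rw [← bigHalf_longPair hq ha, ← bigHalf_longPair hq hb, ← bigHalf_longPair hq hc]
      exact hoct _ _ _ (hrel a ha) (hrel b hb) (hrel c hc)
        (pairDisjoint_longPair hab hb (by lia) (by lia))
        (pairDisjoint_longPair (hab.trans hbc) hc (by lia) (by lia))
        (pairDisjoint_longPair hbc hc (by lia) (by lia))
        (crossingFree_compl_longPair hc (by lia) (by lia) (by lia))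
  · rintro ⟨p, hp⟩ e₁ e₂ e₃ h₁ h₂ h₃ - - - -
    rw [Set.mem_iInter] at hp
    exact ⟨p, ⟨hp ⟨e₁, h₁⟩, hp ⟨e₂, h₂⟩⟩, hp ⟨e₃, h₃⟩⟩
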